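/- Say that a point x ∈ Q̂ is visible from v ∈ V₁ if the closed segment [v,x] intersects Q only in x. Let x ∈ E(Φ) and ρ ∈ Φ. Then: (i) x is visible from ρ̂ if and only if B(ρ̂, x) ≥ 0; (ii) if ρ ∈ Φ⁺, then x is visible from ρ̂ if and only if B(ρ, x) ≥ 0; (iii) if ρ ∈ Φ⁺ and w ∈ W satisfies w(ρ) ∈ Φ⁺, then x is visible from ρ̂ if and only if w·x is visible from w·ρ̂. -/

import Mathlib

open Filter Topology

noncomputable section

variable {ι V : Type*} [Fintype ι] [NormedAddCommGroup V] [NormedSpace ℝ V]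

/-- The set of simple `B`-reflections: the linear automorphisms of `V` given by the
`B`-reflection formula `u ↦ u - 2 (B α u / B α α) • α` associated to a simple root `α ∈ Δ`. -/
def simpleReflections (B : LinearMap.BilinForm ℝ V) (Δ : Module.Basis ι ℝ V) :
    Set (V ≃ₗ[ℝ] V) :=
  { e | ∃ i : ι, ∀ u : V, e u = u - (2 * B (Δ i) u / B (Δ i) (Δ i)) • Δ i }

/-- The geometric Coxeter group `W`: the subgroup of linear automorphisms of `V`
generated by the simple `B`-reflections. -/
def cox (B : LinearMap.BilinForm ℝ V) (Δ : Module.Basis ι ℝ V) : Subgroup (V ≃ₗ[ℝ] V) :=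
  Subgroup.closure (simpleReflections B Δ)

/-- The root system `Φ = W ⬝ Δ`. -/
def Phi (B : LinearMap.BilinForm ℝ V) (Δ : Module.Basis ι ℝ V) : Set V :=
  { ρ | ∃ w ∈ cox B Δ, ∃ i : ι, w (Δ i) = ρ }

/-- The positive roots `Φ⁺ = Φ ∩ cone(Δ)`. -/
def posPhi (B : LinearMap.BilinForm ℝ V) (Δ : Module.Basis ι ℝ V) : Set V :=
  { ρ ∈ Phi B Δ | ∀ i : ι, 0 ≤ Δ.repr ρ i }

/-- `|v|₁`: the sum of the coordinates of `v` in the basis `Δ`. -/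
def l1 (Δ : Module.Basis ι ℝ V) (v : V) : ℝ := ∑ i : ι, Δ.repr v i

/-- The normalization map `v ↦ v̂ = v / |v|₁`. -/
def nrm (Δ : Module.Basis ι ℝ V) (v : V) : V := (l1 Δ v)⁻¹ • v

/-- The set `Φ̂` of normalized roots. -/
def nPhi (B : LinearMap.BilinForm ℝ V) (Δ : Module.Basis ι ℝ V) : Set V :=
  nrm Δ '' posPhi B Δ

/-- `E(Φ)`: the set of accumulation points of the set of normalized roots. -/
def Eset (B : LinearMap.BilinForm ℝ V) (Δ : Module.Basis ι ℝ V) : Set V :=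
  { x | AccPt x (𝓟 (nPhi B Δ)) }

/-- The isotropic cone `Q` of `B`. -/
def isoQ (B : LinearMap.BilinForm ℝ V) : Set V := { v | B v v = 0 }

/-- `x ∈ Q̂` is visible from `v ∈ V₁` if the closed segment `[v,x]` meets `Q` only
in `x`. -/
def visible (B : LinearMap.BilinForm ℝ V) (x v : V) : Prop :=
  segment ℝ v x ∩ isoQ B = {x}

/-!
Visibility is a statement about one quadratic polynomial: if `B x x = 0 < B v v`, then `B y y` is
quadratic in the position of `y` on the line through `v` and `x`, it vanishes at `x`, and its second
zero lies strictly between `v` and `x` exactly when `B v x < 0`. So `x` is visible from `v` if and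
only if `0 ≤ B v x`, a condition invariant under `W` and under positive rescaling of `v` and `x`.

It remains to see that a limit root `x` satisfies `|B x x| ≤ ε` for all `ε > 0` and that `w(x)`
lies in `cone(Δ)` for all `w ∈ W`. These are closed conditions on `x`, so it suffices that all but
finitely many normalized roots satisfy them. For the first, `B ρ̂ ρ̂ = |ρ|₁⁻²` and only finitely
many positive roots have bounded `|ρ|₁`: near an accumulation point of roots there would be `ρ ≠ σ`
whose reflections have a product so close to the identity that it keeps all simple roots positive,
which forces it to be the identity. For the second, `w` makes only finitely many positive roots
negative. Both finiteness statements rest on the fact that `w(α)`, `α ∈ Δ`, is positive or negative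
according as right multiplication by `s_α` lengthens or shortens `w` in the abstract Coxeter group,
which acts on `V` through its geometric representation.
-/

section AccumulationPoints

theorem mem_of_accPt_of_finite_diff {X : Type*} [TopologicalSpace X] [T1Space X] {A C : Set X}
    {x : X} (hx : AccPt x (𝓟 A)) (hC : IsClosed C) (hfin : (A \ C).Finite) : x ∈ C := by
  rw [← Set.inter_union_sdiff A C, ← sup_principal, accPt_sup] at hx
  rcases hx with hx | hx
  · exact hC.closure_subset_iff.2 Set.inter_subset_right
      (mem_closure_iff_clusterPt.2 hx.clusterPt)
  · exact absurd hfin (Set.Infinite.of_accPt hx)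

theorem not_accPt_of_eventually_eq {X : Type*} [TopologicalSpace X] [T1Space X] {A : Set X} {x : X}
    (h : ∀ᶠ p in 𝓝 (x, x), p.1 ∈ A → p.2 ∈ A → p.1 = p.2) : ¬ AccPt x (𝓟 A) := by
  intro hx
  rw [accPt_iff_frequently] at hx
  obtain ⟨y, ⟨hyx, hyA⟩, hy⟩ := (hx.and_eventually h.curry_nhds).exists
  obtain ⟨z, ⟨-, hzA⟩, hz, hzy⟩ :=
    (hx.and_eventually (hy.and (isOpen_ne.mem_nhds hyx.symm))).exists
  exact hzy (hz hyA hzA).symm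

end AccumulationPoints

section Chebyshev

open Polynomial.Chebyshev

theorem eval_S_nonneg_and_le_succ {c : ℝ} (hc : 2 ≤ c) (k : ℕ) :
    0 ≤ (S ℝ (k - 1)).eval c ∧ (S ℝ (k - 1)).eval c ≤ (S ℝ k).eval c := by
  induction k with
  | zero => simp
  | succ k ih =>
    have hrec : (S ℝ (k + 1 : ℕ)).eval c = c * (S ℝ k).eval c - (S ℝ (k - 1)).eval c := by
      simp [S_add_one]
    rw [hrec, Nat.cast_succ, add_sub_cancel_right]
    exact ⟨ih.1.trans ih.2, by nlinarith [ih.1, ih.2]⟩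

theorem sin_pi_div_pos {m : ℕ} (hm : 2 ≤ m) : 0 < Real.sin (Real.pi / m) := by
  have hm' : (1 : ℝ) < m := by exact_mod_cast hm
  exact Real.sin_pos_of_pos_of_lt_pi (by positivity) (div_lt_self Real.pi_pos hm')

theorem eval_S_two_mul_cos_pi_div_nonneg {m k : ℕ} (hm : 2 ≤ m) (hk : k ≤ m) :
    0 ≤ (S ℝ (k - 1)).eval (2 * Real.cos (Real.pi / m)) := by
  have hm' : (0 : ℝ) < m := by positivity
  have hk' : (k : ℝ) ≤ m := by exact_mod_cast hk
  have hsin : 0 ≤ Real.sin (k * (Real.pi / m)) := by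
    refine Real.sin_nonneg_of_nonneg_of_le_pi (by positivity) ?_
    rw [mul_div_left_comm]
    exact mul_le_of_le_one_right Real.pi_pos.le ((div_le_one hm').2 hk')
  refine nonneg_of_mul_nonneg_left (b := Real.sin (Real.pi / m)) ?_ (sin_pi_div_pos hm)
  rw [S_two_mul_real_cos]
  simpa using hsin

end Chebyshev

section DihedralRelation

open Polynomial.Chebyshev Module

theorem sin_two_mul_pi_div_pos {m : ℕ} (hm : 3 ≤ m) : 0 < Real.sin (2 * (Real.pi / m)) := by
  have hm' : (2 : ℝ) < m := by exact_mod_cast hm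
  refine Real.sin_pos_of_pos_of_lt_pi (by positivity) ?_
  rw [mul_div_left_comm]
  exact mul_lt_of_lt_one_right Real.pi_pos ((div_lt_one (by positivity)).2 hm')

theorem eval_S_two_mul_cos_of_even {p : ℕ} (hp : 2 ≤ p) :
    (S ℝ (p - 1)).eval (2 * Real.cos (2 * (Real.pi / (2 * p : ℕ)))) = 0 := by
  refine (mul_eq_zero.1 ?_).resolve_right
    (sin_two_mul_pi_div_pos (show 3 ≤ 2 * p by omega)).ne'
  rw [S_two_mul_real_cos, ← Real.sin_pi]
  push_cast
  congr 1
  field_simp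
  ring

theorem eval_S_add_eval_S_two_mul_cos_of_odd {p : ℕ} (hp : 1 ≤ p) :
    (S ℝ p).eval (2 * Real.cos (2 * (Real.pi / (2 * p + 1 : ℕ)))) +
      (S ℝ (p - 1)).eval (2 * Real.cos (2 * (Real.pi / (2 * p + 1 : ℕ)))) = 0 := by
  refine (mul_eq_zero.1 ?_).resolve_right
    (sin_two_mul_pi_div_pos (show 3 ≤ 2 * p + 1 by omega)).ne'
  rw [add_mul, S_two_mul_real_cos, S_two_mul_real_cos]
  set θ := Real.pi / (2 * p + 1 : ℕ) with hθ
  have hpθ : (2 * p + 1) * θ = Real.pi := by rw [hθ]; push_cast; field_simp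
  have hadd : ((p : ℤ) + 1 : ℝ) * (2 * θ) = Real.pi + θ := by rw [← hpθ]; push_cast; ring
  have hsub : (((p - 1 : ℤ) : ℝ) + 1) * (2 * θ) = Real.pi - θ := by rw [← hpθ]; push_cast; ring
  rw [hadd, hsub, Real.sin_add, Real.sin_sub]
  simp

theorem reflection_mul_reflection_pow_eq_one {E : Type*} [AddCommGroup E] [Module ℝ E] {x y : E}
    {f g : Dual ℝ E} (hf : f x = 2) (hg : g y = 2) {m : ℕ} (hm : 2 ≤ m)
    (hfy : f y = -2 * Real.cos (Real.pi / m)) (hgx : g x = -2 * Real.cos (Real.pi / m)) :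
    (reflection hf * reflection hg) ^ m = 1 := by
  obtain rfl | hm := hm.eq_or_lt
  · simp only [Nat.cast_ofNat, Real.cos_pi_div_two, mul_zero] at hfy hgx
    ext u
    simp only [pow_two, LinearEquiv.mul_apply, reflection_apply, map_sub, map_smul, hf, hg, hfy,
      hgx, LinearEquiv.coe_one, id_eq]
    module
  have ht : 2 * Real.cos (2 * (Real.pi / m)) = f y * g x - 2 := by
    rw [hfy, hgx, Real.cos_two_mul]; ring
  ext u
  rw [reflection_mul_reflection_pow_apply hf hg m u _ ht]
  obtain ⟨p, rfl | rfl⟩ := m.even_or_odd'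
  · rw [show (((2 * p : ℕ) : ℤ) - 2) / 2 = p - 1 by omega,
      show (((2 * p : ℕ) : ℤ) - 1) / 2 = p - 1 by omega, eval_S_two_mul_cos_of_even (by omega)]
    simp
  · rw [show (((2 * p + 1 : ℕ) : ℤ) - 1) / 2 = p by omega,
      show (((2 * p + 1 : ℕ) : ℤ) - 3) / 2 = p - 1 by omega,
      show (((2 * p + 1 : ℕ) : ℤ) - 2) / 2 = p - 1 by omega,
      show ((2 * p + 1 : ℕ) : ℤ) / 2 = p by omega,
      eval_S_add_eval_S_two_mul_cos_of_odd (by omega)]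
    simp

end DihedralRelation

section WordCombinatorics

open CoxeterSystem

variable {I W : Type*} [Group W] {M : CoxeterMatrix I} (cs : CoxeterSystem M W)

theorem exists_eq_mul_wordProd_alternatingWord {w : W} {i j : I} (hj : cs.IsRightDescent w j) :
    ∃ v k, w = v * cs.wordProd (alternatingWord i j (k + 1)) ∧
      cs.length w = cs.length v + (k + 1) ∧
      ¬ cs.IsRightDescent v i ∧ ¬ cs.IsRightDescent v j := by
  induction hn : cs.length w using Nat.strong_induction_on generalizing w i j with
  | _ n ih =>
  subst hn
  have hlen : cs.length (w * cs.simple j) + 1 = cs.length w := cs.isRightDescent_iff.1 hj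
  by_cases hi : cs.IsRightDescent (w * cs.simple j) i
  · obtain ⟨v, k, hw, hk, hvj, hvi⟩ := ih _ (by omega) (i := j) hi rfl
    refine ⟨v, k + 1, ?_, by omega, hvi, hvj⟩
    rw [alternatingWord_succ, cs.wordProd_concat, ← mul_assoc, ← hw,
      cs.simple_mul_simple_cancel_right]
  · refine ⟨w * cs.simple j, 0, ?_, by omega, hi,
      cs.isRightDescent_iff_not_isRightDescent_mul.1 hj⟩
    simp [alternatingWord, cs.simple_mul_simple_cancel_right]

theorem lt_of_not_isRightDescent_mul_alternatingWord {v : W} {i j : I} {k : ℕ} (hM : M i j ≠ 0)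
    (hlen : cs.length (v * cs.wordProd (alternatingWord i j k)) = cs.length v + k)
    (hi : ¬ cs.IsRightDescent (v * cs.wordProd (alternatingWord i j k)) i) : k < M i j := by
  have hreduced : cs.IsReduced (alternatingWord i j k) := by
    have h₁ := cs.length_mul_le v (cs.wordProd (alternatingWord i j k))
    have h₂ := cs.length_wordProd_le (alternatingWord i j k)
    rw [CoxeterSystem.IsReduced]
    rw [length_alternatingWord] at h₂ ⊢
    omega
  have hle : k ≤ M i j := not_lt.1 fun h => cs.not_isReduced_alternatingWord i j hM h hreduced
  refine hle.lt_of_ne fun hk => hi ?_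
  obtain ⟨n, rfl⟩ := Nat.exists_eq_succ_of_ne_zero (hk ▸ hM)
  have hbraid : cs.wordProd (alternatingWord i j (n + 1)) =
      cs.wordProd (alternatingWord i j n) * cs.simple i := by
    have h := cs.wordProd_braidWord_eq i j
    rwa [braidWord, braidWord, M.symmetric j i, ← hk, alternatingWord_succ j i,
      cs.wordProd_concat] at h
  rw [CoxeterSystem.IsRightDescent, hlen, hbraid, ← mul_assoc, cs.simple_mul_simple_cancel_right]
  have h₁ := cs.length_mul_le v (cs.wordProd (alternatingWord i j n))
  have h₂ := cs.length_wordProd_le (alternatingWord i j n)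
  rw [length_alternatingWord] at h₂
  omega

end WordCombinatorics

section GeometricRepresentation

open CoxeterSystem Polynomial.Chebyshev

variable {I E : Type*} [AddCommGroup E] [Module ℝ E]

/-- The `B`-reflection `u ↦ u - 2 B(v, u) v` in a vector `v` normalized by `B v v = 1`. -/
def formReflection (B : LinearMap.BilinForm ℝ E) (v : E) : Module.End ℝ E :=
  Module.preReflection v ((2 : ℝ) • B v)

theorem formReflection_apply (B : LinearMap.BilinForm ℝ E) (u v : E) :
    formReflection B v u = u - (2 * B v u) • v := by
  simp [formReflection, Module.preReflection_apply]

theorem formReflection_self {B : LinearMap.BilinForm ℝ E} {v : E} (hv : B v v = 1) :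
    formReflection B v v = -v := by
  rw [formReflection_apply, hv]
  module

theorem formReflection_formReflection {B : LinearMap.BilinForm ℝ E} {v : E} (hv : B v v = 1)
    (u : E) : formReflection B v (formReflection B v u) = u :=
  Module.involutive_preReflection (by simp [hv]) u

/-- `B` is a symmetric form of type `M` on a space with basis `b` of simple roots: its Gram matrix
is `-cos (π / M i j)`, or at most `-1` where `M i j = 0`, which stands for infinite order.
The diagonal entries `M i i = 1` encode `B (b i) (b i) = -cos π = 1`. -/
structure IsCoxeterForm (M : CoxeterMatrix I) (B : LinearMap.BilinForm ℝ E)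
    (b : Module.Basis I ℝ E) : Prop where
  symm : ∀ u v, B u v = B v u
  eq_neg_cos : ∀ i j, M i j ≠ 0 → B (b i) (b j) = -Real.cos (Real.pi / M i j)
  le_neg_one : ∀ i j, M i j = 0 → B (b i) (b j) ≤ -1

theorem exists_isCoxeterForm {B : LinearMap.BilinForm ℝ E} {b : Module.Basis I ℝ E}
    (hsymm : ∀ u v, B u v = B v u) (hdiag : ∀ i, B (b i) (b i) = 1)
    (hoff : ∀ i j, i ≠ j → B (b i) (b j) ≤ -1 ∨
      ∃ k : ℕ, 2 ≤ k ∧ B (b i) (b j) = -Real.cos (Real.pi / k)) :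
    ∃ M : CoxeterMatrix I, IsCoxeterForm M B b := by
  classical
  -- The infimum of the empty set is `0`, the value of a Coxeter matrix at pairs of infinite order.
  let orders (i j : I) : Set ℕ := {k | 2 ≤ k ∧ B (b i) (b j) = -Real.cos (Real.pi / k)}
  have sInf_mem {i j : I} (h : sInf (orders i j) ≠ 0) : sInf (orders i j) ∈ orders i j :=
    Nat.sInf_mem (Nat.nonempty_of_pos_sInf (Nat.pos_of_ne_zero h))
  let M : CoxeterMatrix I :=
    { M := fun i j => if i = j then 1 else sInf (orders i j)
      isSymm := Matrix.IsSymm.ext fun i j => by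
        simp only [orders, hsymm (b i) (b j), eq_comm (a := i)]
      diagonal := by simp
      off_diagonal := fun i j hij h => by
        rw [if_neg hij] at h
        have := (sInf_mem (by omega : sInf (orders i j) ≠ 0)).1
        omega }
  have off_diag_apply {i j : I} (hij : i ≠ j) : M i j = sInf (orders i j) := if_neg hij
  refine ⟨M, hsymm, fun i j hM => ?_, fun i j hM => ?_⟩
  · obtain rfl | hij := eq_or_ne i j
    · simp [hdiag]
    · rw [off_diag_apply hij] at hM ⊢
      exact (sInf_mem hM).2
  · have hij : i ≠ j := by
      rintro rfl
      simp at hM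
    refine (hoff i j hij).resolve_right fun ⟨k, hk⟩ => ?_
    rw [off_diag_apply hij, Nat.sInf_eq_zero] at hM
    rcases hM with h | h
    · exact absurd h.1 (by norm_num)
    · exact Set.eq_empty_iff_forall_notMem.1 h k hk

namespace IsCoxeterForm

variable {M : CoxeterMatrix I} {B : LinearMap.BilinForm ℝ E} {b : Module.Basis I ℝ E}

theorem apply_simple_self (h : IsCoxeterForm M B b) (i : I) : B (b i) (b i) = 1 := by
  simp [h.eq_neg_cos i i]

theorem two_smul_apply_simple_self (h : IsCoxeterForm M B b) (i : I) :
    ((2 : ℝ) • B (b i)) (b i) = 2 := by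
  simp [h.apply_simple_self i]

theorem isLiftable_reflection (h : IsCoxeterForm M B b) :
    M.IsLiftable fun i => Module.reflection (h.two_smul_apply_simple_self i) := by
  intro i j
  obtain rfl | hij := eq_or_ne i j
  · ext u
    simp [LinearEquiv.mul_apply, Module.involutive_reflection _ u]
  obtain hM | hM := eq_or_ne (M i j) 0
  · rw [hM, pow_zero]
  have hM₁ := M.off_diagonal i j hij
  apply reflection_mul_reflection_pow_eq_one _ _ (by omega)
  · simp [h.eq_neg_cos i j hM]
  · simp [h.symm (b j), h.eq_neg_cos i j hM]

/-- The geometric representation of the Coxeter group of type `M`, in which the simple generator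
`i` acts as the `B`-reflection in the simple root `b i`. -/
def rep (h : IsCoxeterForm M B b) : M.Group →* (E ≃ₗ[ℝ] E) :=
  M.toCoxeterSystem.lift ⟨_, h.isLiftable_reflection⟩

theorem rep_simple_apply (h : IsCoxeterForm M B b) (i : I) (u : E) :
    h.rep (M.toCoxeterSystem.simple i) u = formReflection B (b i) u := by
  rw [rep, lift_apply_simple]
  rfl

theorem rep_simple_self (h : IsCoxeterForm M B b) (i : I) :
    h.rep (M.toCoxeterSystem.simple i) (b i) = -b i := by
  rw [h.rep_simple_apply, formReflection_self (h.apply_simple_self i)]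

theorem apply_rep_rep (h : IsCoxeterForm M B b) (w : M.Group) (u v : E) :
    B (h.rep w u) (h.rep w v) = B u v := by
  induction w using M.toCoxeterSystem.simple_induction_left with
  | one => simp
  | mul_simple_left w i ih =>
    rw [← ih, map_mul, LinearEquiv.mul_apply, LinearEquiv.mul_apply, h.rep_simple_apply,
      h.rep_simple_apply, formReflection_apply, formReflection_apply]
    simp only [map_sub, map_smul, LinearMap.sub_apply, LinearMap.smul_apply, smul_eq_mul,
      h.apply_simple_self, h.symm (h.rep w u) (b i)]
    ring

theorem rep_conj_simple_apply (h : IsCoxeterForm M B b) (w : M.Group) (i : I) (u : E) :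
    h.rep (w * M.toCoxeterSystem.simple i * w⁻¹) u = formReflection B (h.rep w (b i)) u := by
  have hu : h.rep w (h.rep w⁻¹ u) = u := by
    rw [← LinearEquiv.mul_apply, ← map_mul, mul_inv_cancel, map_one, LinearEquiv.coe_one, id]
  rw [map_mul, map_mul, LinearEquiv.mul_apply, LinearEquiv.mul_apply, h.rep_simple_apply,
    formReflection_apply, formReflection_apply, map_sub, map_smul, hu,
    ← h.apply_rep_rep w (b i), hu]

theorem rep_alternatingWord_apply (h : IsCoxeterForm M B b) (i j : I) (k : ℕ) :
    h.rep (M.toCoxeterSystem.wordProd (alternatingWord i j k)) (b i) =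
      (S ℝ k).eval (-2 * B (b i) (b j)) • b (if Even k then i else j) +
        (S ℝ (k - 1)).eval (-2 * B (b i) (b j)) • b (if Even k then j else i) := by
  induction k with
  | zero => simp [alternatingWord]
  | succ k ih =>
    rw [alternatingWord_succ', wordProd_cons, map_mul, LinearEquiv.mul_apply, ih, map_add,
      map_smul, map_smul, Nat.cast_succ, add_sub_cancel_right, S_add_one]
    have hB := h.symm (b j) (b i)
    by_cases hk : Even k <;>
    · simp only [hk, Nat.even_add_one, h.rep_simple_apply, formReflection_apply,
        h.apply_simple_self, hB, if_true, if_false, not_true_eq_false, not_false_eq_true,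
        Polynomial.eval_sub, Polynomial.eval_mul, Polynomial.eval_X]
      module

theorem eval_S_nonneg (h : IsCoxeterForm M B b) {i j : I} (hij : i ≠ j) {k : ℕ}
    (hk : M i j ≠ 0 → k ≤ M i j) : 0 ≤ (S ℝ (k - 1)).eval (-2 * B (b i) (b j)) := by
  obtain hM | hM := eq_or_ne (M i j) 0
  · exact (eval_S_nonneg_and_le_succ (by linarith [h.le_neg_one i j hM]) k).1
  · have hM₁ := M.off_diagonal i j hij
    rw [h.eq_neg_cos i j hM, neg_mul_neg]
    exact eval_S_two_mul_cos_pi_div_nonneg (by omega) (hk hM)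

/-- Pass from `w` to a minimal representative `v` of its coset modulo the dihedral group generated
by `i` and a right descent `j`: inductively `v` maps `b i` and `b j` into the cone, and the dihedral
part of `w` maps `b i` to a nonnegative combination of these two. -/
theorem repr_rep_nonneg_of_not_isRightDescent (h : IsCoxeterForm M B b) {w : M.Group} {i : I}
    (hi : ¬ M.toCoxeterSystem.IsRightDescent w i) : 0 ≤ b.repr (h.rep w (b i)) := by
  induction hn : M.toCoxeterSystem.length w using Nat.strong_induction_on generalizing w i with
  | _ n ih =>
  subst hn
  obtain rfl | hw := eq_or_ne w 1
  · simp
  obtain ⟨j, hj⟩ := M.toCoxeterSystem.exists_rightDescent_of_ne_one hw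
  have hij : i ≠ j := by rintro rfl; exact hi hj
  obtain ⟨v, k, rfl, hlen, hvi, hvj⟩ :=
    exists_eq_mul_wordProd_alternatingWord M.toCoxeterSystem (i := i) hj
  have hlt (hM : M i j ≠ 0) : k + 1 < M i j :=
    lt_of_not_isRightDescent_mul_alternatingWord _ hM hlen hi
  have hnonneg (p : Prop) [Decidable p] (i' j' : I) (hi' : 0 ≤ b.repr (h.rep v (b i')))
      (hj' : 0 ≤ b.repr (h.rep v (b j'))) : 0 ≤ b.repr (h.rep v (b (if p then i' else j'))) := by
    split_ifs <;> assumption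
  have hvi' := ih _ (by omega) hvi rfl
  have hvj' := ih _ (by omega) hvj rfl
  rw [map_mul, LinearEquiv.mul_apply, h.rep_alternatingWord_apply, map_add, map_smul, map_smul,
    map_add, map_smul, map_smul]
  refine add_nonneg (smul_nonneg ?_ (hnonneg _ _ _ hvi' hvj'))
    (smul_nonneg (h.eval_S_nonneg hij fun hM => (hlt hM).le) (hnonneg _ _ _ hvj' hvi'))
  simpa using h.eval_S_nonneg hij (k := k + 1 + 1) hlt

theorem repr_rep_nonpos_of_isRightDescent (h : IsCoxeterForm M B b) {w : M.Group} {i : I}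
    (hi : M.toCoxeterSystem.IsRightDescent w i) : b.repr (h.rep w (b i)) ≤ 0 := by
  have hpos := h.repr_rep_nonneg_of_not_isRightDescent
    (M.toCoxeterSystem.isRightDescent_iff_not_isRightDescent_mul.1 hi)
  rwa [map_mul, LinearEquiv.mul_apply, h.rep_simple_self, map_neg, map_neg, neg_nonneg] at hpos

theorem eq_one_of_forall_repr_rep_nonneg (h : IsCoxeterForm M B b) {w : M.Group}
    (hw : ∀ i, 0 ≤ b.repr (h.rep w (b i))) : w = 1 := by
  by_contra hne
  obtain ⟨i, hi⟩ := M.toCoxeterSystem.exists_rightDescent_of_ne_one hne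
  have hzero := le_antisymm (h.repr_rep_nonpos_of_isRightDescent hi) (hw i)
  rw [LinearEquiv.map_eq_zero_iff, LinearEquiv.map_eq_zero_iff] at hzero
  exact b.ne_zero i hzero

end IsCoxeterForm

end GeometricRepresentation

section Coordinates

variable {Δ : Module.Basis ι ℝ V} {v : V}

theorem l1_eq_sumCoords (Δ : Module.Basis ι ℝ V) : l1 Δ = Δ.sumCoords := by
  ext v
  rw [Module.Basis.coe_sumCoords_of_fintype]
  simp [l1]

theorem l1_pos (hv : 0 ≤ Δ.repr v) (h0 : v ≠ 0) : 0 < l1 Δ v := by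
  refine (Finset.sum_nonneg fun i _ => hv i).lt_of_ne' fun hsum => h0 ?_
  rw [Finset.sum_eq_zero_iff_of_nonneg fun i _ => hv i] at hsum
  exact Δ.ext_elem fun i => by simp [hsum i (Finset.mem_univ i)]

theorem apply_nrm_left (B : LinearMap.BilinForm ℝ V) (u : V) :
    B (nrm Δ v) u = (l1 Δ v)⁻¹ * B v u := by
  simp [nrm]

theorem apply_nrm_right (B : LinearMap.BilinForm ℝ V) (u : V) :
    B u (nrm Δ v) = (l1 Δ v)⁻¹ * B u v := by
  simp [nrm]

theorem apply_nrm_nrm_self (B : LinearMap.BilinForm ℝ V) :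
    B (nrm Δ v) (nrm Δ v) = (l1 Δ v ^ 2)⁻¹ * B v v := by
  rw [apply_nrm_left, apply_nrm_right, ← mul_assoc, sq, mul_inv]

theorem l1_nrm (hv : l1 Δ v ≠ 0) : l1 Δ (nrm Δ v) = 1 := by
  rw [nrm, l1_eq_sumCoords, map_smul, ← l1_eq_sumCoords, smul_eq_mul, inv_mul_cancel₀ hv]

end Coordinates

section Continuity

variable {E : Type*} [NormedAddCommGroup E] [NormedSpace ℝ E] [FiniteDimensional ℝ E]

theorem continuous_bilinForm (B : LinearMap.BilinForm ℝ E) :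
    Continuous fun p : E × E => B p.1 p.2 :=
  B.toContinuousBilinearMap.continuous₂

theorem continuous_bilinForm_self (B : LinearMap.BilinForm ℝ E) : Continuous fun v => B v v :=
  (continuous_bilinForm B).comp (continuous_id.prodMk continuous_id)

theorem continuous_formReflection (B : LinearMap.BilinForm ℝ E) :
    Continuous fun p : E × E => formReflection B p.1 p.2 := by
  simp only [formReflection_apply]
  exact continuous_snd.sub ((continuous_const.mul (continuous_bilinForm B)).smul continuous_fst)

theorem continuous_l1 (Δ : Module.Basis ι ℝ V) : Continuous (l1 Δ) := by
  have : FiniteDimensional ℝ V := Module.Finite.of_basis Δ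
  rw [l1_eq_sumCoords]
  exact LinearMap.continuous_of_finiteDimensional _

theorem eventually_forall_l1_formReflection_formReflection_pos (B : LinearMap.BilinForm ℝ V)
    (Δ : Module.Basis ι ℝ V) {v : V} (hv : B v v = 1) :
    ∀ᶠ p in 𝓝 (v, v), ∀ i, 0 < l1 Δ (formReflection B p.1 (formReflection B p.2 (Δ i))) := by
  have : FiniteDimensional ℝ V := Module.Finite.of_basis Δ
  refine eventually_all.2 fun i => Tendsto.eventually_const_lt ?_ (Continuous.continuousAt ?_)
  · rw [formReflection_formReflection hv, l1_eq_sumCoords, Module.Basis.sumCoords_self_apply]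
    exact one_pos
  · exact (continuous_l1 Δ).comp ((continuous_formReflection B).comp (continuous_fst.prodMk
      ((continuous_formReflection B).comp (continuous_snd.prodMk continuous_const))))

end Continuity

theorem mem_of_mem_Eset {B : LinearMap.BilinForm ℝ V} {Δ : Module.Basis ι ℝ V} {x : V}
    {C : Set V} (hx : x ∈ Eset B Δ) (hC : IsClosed C)
    (hfin : {ρ ∈ posPhi B Δ | nrm Δ ρ ∉ C}.Finite) : x ∈ C := by
  refine mem_of_accPt_of_finite_diff hx hC ((hfin.image (nrm Δ)).subset ?_)
  rintro _ ⟨⟨ρ, hρ, rfl⟩, hmem⟩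
  exact ⟨ρ, ⟨hρ, hmem⟩, rfl⟩

namespace IsCoxeterForm

section Roots

variable {I E : Type*} [NormedAddCommGroup E] [NormedSpace ℝ E]
variable {M : CoxeterMatrix I} {B : LinearMap.BilinForm ℝ E} {Δ : Module.Basis I ℝ E} {ρ σ : E}

theorem range_rep (h : IsCoxeterForm M B Δ) : h.rep.range = cox B Δ := by
  have hsimple : simpleReflections B Δ = Set.range (h.rep ∘ M.toCoxeterSystem.simple) := by
    ext e
    simp only [simpleReflections, h.apply_simple_self, div_one, Set.mem_ofPred_eq, Set.mem_range,
      Function.comp_apply, LinearEquiv.ext_iff, h.rep_simple_apply, formReflection_apply, eq_comm]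
  rw [cox, hsimple, Set.range_comp, ← MonoidHom.map_closure,
    M.toCoxeterSystem.subgroup_closure_range_simple, MonoidHom.range_eq_map]

theorem mem_Phi_iff (h : IsCoxeterForm M B Δ) :
    ρ ∈ Phi B Δ ↔ ∃ w i, h.rep w (Δ i) = ρ := by
  simp [Phi, ← h.range_rep]

theorem rep_mem_Phi (h : IsCoxeterForm M B Δ) (hρ : ρ ∈ Phi B Δ) (w : M.Group) :
    h.rep w ρ ∈ Phi B Δ := by
  obtain ⟨v, i, rfl⟩ := h.mem_Phi_iff.1 hρ
  exact h.mem_Phi_iff.2 ⟨w * v, i, by rw [map_mul, LinearEquiv.mul_apply]⟩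

theorem simple_mem_Phi (h : IsCoxeterForm M B Δ) (i : I) : Δ i ∈ Phi B Δ :=
  h.mem_Phi_iff.2 ⟨1, i, by simp⟩

theorem apply_self_of_mem_Phi (h : IsCoxeterForm M B Δ) (hρ : ρ ∈ Phi B Δ) : B ρ ρ = 1 := by
  obtain ⟨w, i, rfl⟩ := h.mem_Phi_iff.1 hρ
  rw [h.apply_rep_rep, h.apply_simple_self]

theorem ne_zero_of_mem_Phi (h : IsCoxeterForm M B Δ) (hρ : ρ ∈ Phi B Δ) : ρ ≠ 0 := by
  rintro rfl
  simpa using h.apply_self_of_mem_Phi hρ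

theorem exists_rep_eq_formReflection (h : IsCoxeterForm M B Δ) (hρ : ρ ∈ Phi B Δ) :
    ∃ w, ∀ u, h.rep w u = formReflection B ρ u := by
  obtain ⟨w, i, rfl⟩ := h.mem_Phi_iff.1 hρ
  exact ⟨_, h.rep_conj_simple_apply w i⟩

theorem repr_nonneg_or_nonpos (h : IsCoxeterForm M B Δ) (hρ : ρ ∈ Phi B Δ) :
    0 ≤ Δ.repr ρ ∨ Δ.repr ρ ≤ 0 := by
  obtain ⟨w, i, rfl⟩ := h.mem_Phi_iff.1 hρ
  by_cases hi : M.toCoxeterSystem.IsRightDescent w i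
  · exact Or.inr (h.repr_rep_nonpos_of_isRightDescent hi)
  · exact Or.inl (h.repr_rep_nonneg_of_not_isRightDescent hi)

theorem simple_mem_posPhi (h : IsCoxeterForm M B Δ) (i : I) : Δ i ∈ posPhi B Δ :=
  ⟨h.simple_mem_Phi i, fun j => by
    rw [Δ.repr_self]
    exact Finsupp.single_nonneg.2 zero_le_one j⟩

theorem eq_of_eq_smul_of_mem_posPhi (h : IsCoxeterForm M B Δ) (hρ : ρ ∈ posPhi B Δ)
    (hσ : σ ∈ posPhi B Δ) {c : ℝ} (hσρ : σ = c • ρ) : σ = ρ := by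
  have hsq : c * c = 1 := by
    simpa [hσρ, h.apply_self_of_mem_Phi hρ.1] using h.apply_self_of_mem_Phi hσ.1
  obtain rfl | rfl := mul_self_eq_one_iff.1 hsq
  · rw [hσρ, one_smul]
  · refine absurd (Δ.ext_elem fun i => ?_) (h.ne_zero_of_mem_Phi hρ.1)
    rw [map_zero]
    refine le_antisymm ?_ (hρ.2 i)
    simpa [hσρ] using hσ.2 i

theorem rep_simple_mem_posPhi (h : IsCoxeterForm M B Δ) (hρ : ρ ∈ posPhi B Δ) {i : I}
    (hne : ρ ≠ Δ i) : h.rep (M.toCoxeterSystem.simple i) ρ ∈ posPhi B Δ := by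
  have hmem := h.rep_mem_Phi hρ.1 (M.toCoxeterSystem.simple i)
  refine (h.repr_nonneg_or_nonpos hmem).elim (fun hnonneg => ⟨hmem, hnonneg⟩) fun hnonpos => ?_
  have hzero (j : I) (hj : j ≠ i) : Δ.repr ρ j = 0 := by
    refine le_antisymm ?_ (hρ.2 j)
    rw [h.rep_simple_apply, formReflection_apply] at hnonpos
    simpa [hj] using hnonpos j
  have hsmul : ρ = Δ.repr ρ i • Δ i := by
    refine Δ.ext_elem fun j => ?_
    obtain rfl | hj := eq_or_ne j i
    · simp
    · simp [hzero j hj, hj]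
  exact absurd (h.eq_of_eq_smul_of_mem_posPhi (h.simple_mem_posPhi i) hρ hsmul) hne

theorem finite_setOf_rep_notMem_posPhi (h : IsCoxeterForm M B Δ) (w : M.Group) :
    {ρ ∈ posPhi B Δ | h.rep w ρ ∉ posPhi B Δ}.Finite := by
  induction w using M.toCoxeterSystem.simple_induction_left with
  | one => simp
  | mul_simple_left w i ih =>
    refine (ih.union (Set.finite_singleton ((h.rep w).symm (Δ i)))).subset fun ρ ⟨hρ, hwρ⟩ => ?_
    by_contra hmem
    simp only [Set.mem_union, Set.mem_ofPred_eq, Set.mem_singleton_iff, hρ, true_and, not_or,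
      not_not, LinearEquiv.eq_symm_apply] at hmem
    rw [map_mul] at hwρ
    exact hwρ (h.rep_simple_mem_posPhi hmem.1 hmem.2)

end Roots

variable {M : CoxeterMatrix ι} {B : LinearMap.BilinForm ℝ V} {Δ : Module.Basis ι ℝ V} {ρ σ : V}

section CoordinateSum

theorem l1_pos_of_mem_posPhi (h : IsCoxeterForm M B Δ) (hρ : ρ ∈ posPhi B Δ) : 0 < l1 Δ ρ :=
  l1_pos hρ.2 (h.ne_zero_of_mem_Phi hρ.1)

theorem mem_posPhi_or_l1_neg (h : IsCoxeterForm M B Δ) (hρ : ρ ∈ Phi B Δ) :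
    ρ ∈ posPhi B Δ ∨ l1 Δ ρ < 0 := by
  refine (h.repr_nonneg_or_nonpos hρ).imp (fun hnonneg => ⟨hρ, hnonneg⟩) fun hnonpos => ?_
  have hneg : 0 < l1 Δ (-ρ) := l1_pos (by simpa using hnonpos)
    (neg_ne_zero.2 (h.ne_zero_of_mem_Phi hρ))
  rwa [l1_eq_sumCoords, map_neg, neg_pos, ← l1_eq_sumCoords] at hneg

theorem l1_ne_zero_of_mem_Phi (h : IsCoxeterForm M B Δ) (hρ : ρ ∈ Phi B Δ) : l1 Δ ρ ≠ 0 :=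
  (h.mem_posPhi_or_l1_neg hρ).elim (fun hpos => (h.l1_pos_of_mem_posPhi hpos).ne') LT.lt.ne

theorem mem_posPhi_of_l1_pos (h : IsCoxeterForm M B Δ) (hρ : ρ ∈ Phi B Δ) (hpos : 0 < l1 Δ ρ) :
    ρ ∈ posPhi B Δ :=
  (h.mem_posPhi_or_l1_neg hρ).resolve_right hpos.le.not_gt

end CoordinateSum

section Discreteness

/-- The product of the two reflections keeps every simple root positive, hence is the identity. -/
theorem eq_of_forall_l1_formReflection_formReflection_pos (h : IsCoxeterForm M B Δ)
    (hρ : ρ ∈ posPhi B Δ) (hσ : σ ∈ posPhi B Δ)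
    (hpos : ∀ i, 0 < l1 Δ (formReflection B ρ (formReflection B σ (Δ i)))) : ρ = σ := by
  obtain ⟨v, hv⟩ := h.exists_rep_eq_formReflection hρ.1
  obtain ⟨w, hw⟩ := h.exists_rep_eq_formReflection hσ.1
  have hvw (u : V) : h.rep (v * w) u = formReflection B ρ (formReflection B σ u) := by
    rw [map_mul, LinearEquiv.mul_apply, hw, hv]
  have hone : v * w = 1 := h.eq_one_of_forall_repr_rep_nonneg fun i =>
    (h.mem_posPhi_of_l1_pos (h.rep_mem_Phi (h.simple_mem_Phi i) _) (hvw _ ▸ hpos i)).2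
  have hσσ : formReflection B ρ σ = -σ := by
    have := hvw σ
    rw [hone, map_one, LinearEquiv.coe_one, id, formReflection_self (h.apply_self_of_mem_Phi hσ.1),
      map_neg] at this
    exact (neg_eq_iff_eq_neg.2 this).symm
  have hsmul : σ = B ρ σ • ρ := by
    rw [formReflection_apply] at hσσ
    linear_combination (norm := module) (1 / 2 : ℝ) • hσσ
  exact (h.eq_of_eq_smul_of_mem_posPhi hρ hσ hsmul).symm

theorem not_accPt_posPhi {I : Type*} [Finite I] {M : CoxeterMatrix I} {Δ : Module.Basis I ℝ V}
    (h : IsCoxeterForm M B Δ) (v : V) : ¬ AccPt v (𝓟 (posPhi B Δ)) := by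
  have := Fintype.ofFinite I
  have : FiniteDimensional ℝ V := Module.Finite.of_basis Δ
  intro hacc
  have hv : B v v = 1 := mem_of_accPt_of_finite_diff (C := {u | B u u = 1}) hacc
    (isClosed_eq (continuous_bilinForm_self B) continuous_const)
    (Set.finite_empty.subset fun ρ hρ => hρ.2 (h.apply_self_of_mem_Phi hρ.1.1))
  refine not_accPt_of_eventually_eq ?_ hacc
  filter_upwards [eventually_forall_l1_formReflection_formReflection_pos B Δ hv] with p hp h₁ h₂
  exact h.eq_of_forall_l1_formReflection_formReflection_pos h₁ h₂ hp

theorem finite_setOf_l1_le (h : IsCoxeterForm M B Δ) (C : ℝ) :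
    {ρ ∈ posPhi B Δ | l1 Δ ρ ≤ C}.Finite := by
  have : FiniteDimensional ℝ V := Module.Finite.of_basis Δ
  have hcompact : IsCompact (Δ.equivFunL.symm '' Set.Icc 0 fun _ => C) :=
    isCompact_Icc.image Δ.equivFunL.symm.continuous
  have hsubset : {ρ ∈ posPhi B Δ | l1 Δ ρ ≤ C} ⊆ Δ.equivFunL.symm '' Set.Icc 0 fun _ => C :=
    fun ρ ⟨hρ, hle⟩ => ⟨Δ.equivFunL ρ, ⟨hρ.2, fun i =>
      (Finset.single_le_sum (fun j _ => hρ.2 j) (Finset.mem_univ i)).trans hle⟩, by simp⟩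
  by_contra hinf
  obtain ⟨v, -, hv⟩ := Set.Infinite.exists_accPt_of_subset_isCompact hinf hcompact hsubset
  exact h.not_accPt_posPhi v (hv.mono (principal_mono.2 fun ρ hρ => hρ.1))

end Discreteness

section LimitRoots

variable {x : V}

theorem l1_eq_one_of_mem_Eset (h : IsCoxeterForm M B Δ) (hx : x ∈ Eset B Δ) : l1 Δ x = 1 := by
  refine mem_of_mem_Eset (C := {v | l1 Δ v = 1}) hx
    (isClosed_eq (continuous_l1 Δ) continuous_const) (Set.finite_empty.subset ?_)
  exact fun ρ hρ => hρ.2 (l1_nrm (h.l1_pos_of_mem_posPhi hρ.1).ne')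

theorem apply_self_eq_zero_of_mem_Eset (h : IsCoxeterForm M B Δ) (hx : x ∈ Eset B Δ) :
    B x x = 0 := by
  have : FiniteDimensional ℝ V := Module.Finite.of_basis Δ
  rw [← abs_nonpos_iff]
  refine le_of_forall_pos_le_add fun ε hε => ?_
  rw [zero_add]
  refine mem_of_mem_Eset (C := {v | |B v v| ≤ ε}) hx
    (isClosed_le (continuous_bilinForm_self B).abs continuous_const)
    ((h.finite_setOf_l1_le √ε⁻¹).subset fun ρ ⟨hρ, hlt⟩ => ⟨hρ, ?_⟩)
  contrapose! hlt
  rw [Set.mem_ofPred_eq, apply_nrm_nrm_self, h.apply_self_of_mem_Phi hρ.1, mul_one,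
    abs_of_nonneg (by positivity)]
  exact (inv_lt_of_inv_lt₀ hε (Real.lt_sq_of_sqrt_lt hlt)).le

theorem repr_rep_nonneg_of_mem_Eset (h : IsCoxeterForm M B Δ) (hx : x ∈ Eset B Δ) (w : M.Group)
    (i : ι) : 0 ≤ Δ.repr (h.rep w x) i := by
  have : FiniteDimensional ℝ V := Module.Finite.of_basis Δ
  refine mem_of_mem_Eset (C := {v | 0 ≤ Δ.repr (h.rep w v) i}) hx
    (isClosed_le continuous_const
      (Δ.coord i ∘ₗ (h.rep w).toLinearMap).continuous_of_finiteDimensional)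
    ((h.finite_setOf_rep_notMem_posPhi w).subset fun ρ ⟨hρ, hneg⟩ => ⟨hρ, fun hwρ => hneg ?_⟩)
  rw [Set.mem_ofPred_eq, nrm, map_smul, map_smul]
  exact mul_nonneg (inv_nonneg.2 (h.l1_pos_of_mem_posPhi hρ).le) (hwρ.2 i)

theorem l1_rep_pos_of_mem_Eset (h : IsCoxeterForm M B Δ) (hx : x ∈ Eset B Δ) (w : M.Group) :
    0 < l1 Δ (h.rep w x) := by
  have hx₀ : x ≠ 0 := by
    rintro rfl
    simpa [l1] using h.l1_eq_one_of_mem_Eset hx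
  exact l1_pos (h.repr_rep_nonneg_of_mem_Eset hx w) (by simpa using hx₀)

end LimitRoots

end IsCoxeterForm

section Visibility

theorem apply_smul_add_smul_self_of_isotropic {E : Type*} [AddCommGroup E] [Module ℝ E]
    {B : LinearMap.BilinForm ℝ E} (hsymm : ∀ u v, B u v = B v u) {x : E} (hx : B x x = 0) (v : E)
    (s t : ℝ) :
    B (s • v + t • x) (s • v + t • x) = s * (s * B v v + 2 * t * B v x) := by
  simp only [map_add, map_smul, LinearMap.add_apply, LinearMap.smul_apply, smul_eq_mul, hx,
    hsymm x v]
  ring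

variable {B : LinearMap.BilinForm ℝ V} {x v : V}

theorem nonneg_of_visible (hsymm : ∀ u v, B u v = B v u) (hx : B x x = 0) (hv : 0 < B v v)
    (h : visible B x v) : 0 ≤ B v x := by
  by_contra! hneg
  have hD : 0 < B v v - 2 * B v x := by linarith
  have hs : 0 < -2 * B v x / (B v v - 2 * B v x) := div_pos (by linarith) hD
  -- The second zero of the quadratic polynomial `t ↦ B y y` along `y = (1 - t) v + t x`.
  have hmem : (-2 * B v x / (B v v - 2 * B v x)) • v + (B v v / (B v v - 2 * B v x)) • x ∈
      segment ℝ v x ∩ isoQ B := by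
    refine ⟨⟨_, _, hs.le, by positivity, by field_simp; ring, rfl⟩, ?_⟩
    rw [isoQ, Set.mem_ofPred_eq, apply_smul_add_smul_self_of_isotropic hsymm hx]
    field_simp
    ring
  rw [visible] at h
  rw [h, Set.mem_singleton_iff] at hmem
  have hpair := congrArg (fun y => B y x) hmem
  simp only [map_add, map_smul, LinearMap.add_apply, LinearMap.smul_apply, smul_eq_mul, hx,
    mul_zero, add_zero] at hpair
  exact (mul_neg_of_pos_of_neg hs hneg).ne hpair

theorem visible_of_nonneg (hsymm : ∀ u v, B u v = B v u) (hx : B x x = 0) (hv : 0 < B v v)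
    (h : 0 ≤ B v x) : visible B x v := by
  refine Set.Subset.antisymm ?_ (Set.singleton_subset_iff.2 ⟨right_mem_segment ℝ v x, hx⟩)
  rintro _ ⟨⟨s, t, hs, ht, hst, rfl⟩, hQ⟩
  rw [isoQ, Set.mem_ofPred_eq, apply_smul_add_smul_self_of_isotropic hsymm hx] at hQ
  obtain rfl : s = 0 := by
    by_contra hne
    have hpos : 0 < s * (s * B v v + 2 * t * B v x) := by
      have := hs.lt_of_ne' hne
      positivity
    exact hpos.ne' hQ
  obtain rfl : t = 1 := by linarith
  simp

theorem visible_iff_nonneg (hsymm : ∀ u v, B u v = B v u) (hx : B x x = 0) (hv : 0 < B v v) :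
    visible B x v ↔ 0 ≤ B v x :=
  ⟨nonneg_of_visible hsymm hx hv, visible_of_nonneg hsymm hx hv⟩

namespace IsCoxeterForm

variable {M : CoxeterMatrix ι} {Δ : Module.Basis ι ℝ V} {ρ : V}

theorem visible_nrm_iff_of_mem_Phi (h : IsCoxeterForm M B Δ) (hx : B x x = 0)
    (hρ : ρ ∈ Phi B Δ) : visible B x (nrm Δ ρ) ↔ 0 ≤ B (nrm Δ ρ) x := by
  refine visible_iff_nonneg h.symm hx ?_
  have := h.l1_ne_zero_of_mem_Phi hρ
  rw [apply_nrm_nrm_self, h.apply_self_of_mem_Phi hρ]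
  positivity

theorem visible_nrm_iff_of_mem_posPhi (h : IsCoxeterForm M B Δ) (hx : B x x = 0)
    (hρ : ρ ∈ posPhi B Δ) : visible B x (nrm Δ ρ) ↔ 0 ≤ B ρ x := by
  rw [h.visible_nrm_iff_of_mem_Phi hx hρ.1, apply_nrm_left,
    mul_nonneg_iff_of_pos_left (inv_pos.2 (h.l1_pos_of_mem_posPhi hρ))]

theorem visible_nrm_rep_iff (h : IsCoxeterForm M B Δ) (hx : x ∈ Eset B Δ) {w : M.Group}
    (hρ : h.rep w ρ ∈ posPhi B Δ) :
    visible B (nrm Δ (h.rep w x)) (nrm Δ (h.rep w ρ)) ↔ 0 ≤ B ρ x := by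
  have hiso : B (nrm Δ (h.rep w x)) (nrm Δ (h.rep w x)) = 0 := by
    rw [apply_nrm_nrm_self, h.apply_rep_rep, h.apply_self_eq_zero_of_mem_Eset hx, mul_zero]
  rw [h.visible_nrm_iff_of_mem_posPhi hiso hρ, apply_nrm_right,
    mul_nonneg_iff_of_pos_left (inv_pos.2 (h.l1_rep_pos_of_mem_Eset hx w)), h.apply_rep_rep]

end IsCoxeterForm

end Visibility

/-- Visibility criterion.  Let `x ∈ E(Φ)` and `ρ ∈ Φ`.  Then:
(i) `x` is visible from `ρ̂` iff `B(ρ̂,x) ≥ 0`;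
(ii) if `ρ ∈ Φ⁺`, `x` is visible from `ρ̂` iff `B(ρ,x) ≥ 0`;
(iii) if `ρ ∈ Φ⁺` and `w ∈ W` with `w(ρ) ∈ Φ⁺`, then `x` is visible from `ρ̂` iff
`w·x` is visible from `w·ρ̂`. -/
theorem statement13 (B : LinearMap.BilinForm ℝ V) (Δ : Module.Basis ι ℝ V)
    (hsymm : ∀ u v : V, B u v = B v u)
    (hdiag : ∀ i : ι, B (Δ i) (Δ i) = 1)
    (hoff : ∀ i j : ι, i ≠ j → B (Δ i) (Δ j) ≤ -1 ∨
      ∃ k : ℕ, 2 ≤ k ∧ B (Δ i) (Δ j) = -Real.cos (Real.pi / (k : ℝ)))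
    (x : V) (hx : x ∈ Eset B Δ) (ρ : V) (hρ : ρ ∈ Phi B Δ) :
    (visible B x (nrm Δ ρ) ↔ 0 ≤ B (nrm Δ ρ) x) ∧
    (ρ ∈ posPhi B Δ → (visible B x (nrm Δ ρ) ↔ 0 ≤ B ρ x)) ∧
    (∀ w ∈ cox B Δ, ρ ∈ posPhi B Δ → w ρ ∈ posPhi B Δ →
      (visible B x (nrm Δ ρ) ↔ visible B (nrm Δ (w x)) (nrm Δ (w ρ)))) := by
  obtain ⟨M, h⟩ := exists_isCoxeterForm hsymm hdiag hoff
  have hxx : B x x = 0 := h.apply_self_eq_zero_of_mem_Eset hx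
  refine ⟨h.visible_nrm_iff_of_mem_Phi hxx hρ, h.visible_nrm_iff_of_mem_posPhi hxx, ?_⟩
  intro w hw hρpos hwρ
  obtain ⟨g, rfl⟩ : w ∈ h.rep.range := h.range_rep ▸ hw
  rw [h.visible_nrm_iff_of_mem_posPhi hxx hρpos, h.visible_nrm_rep_iff hx hwρ]
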